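/- Let H ∈ ℂ^{N×M} be a complex matrix with i-th row f_iᴴ, let ρ > 0 and α ∈ (0,1), and let D ∈ ℝ^{N×N} be the diagonal matrix with entries d_i = 1 + ρ(1−α)·‖f_i‖². For a subset K ⊆ {1,…,N}, let H_K be the |K|×M row submatrix of H and D_K the corresponding |K|×|K| diagonal block, and define the quantized uplink capacity R(K) = log₂ det( I_{|K|} + ρ·α²·( α²·I_{|K|} + α(1−α)·diag(ρ·H_K·H_Kᴴ + I_{|K|}) )⁻¹ · H_K·H_Kᴴ ). Then: (i) R(K) = log₂ det( I_{|K|} + ρ·α·(D_K)⁻¹·H_K·H_Kᴴ ); and (ii) the set function K ↦ R(K) is normalized (R(∅) = 0), monotone nondecreasing, and submodular. -/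

import Mathlib

open Matrix

/-- The row submatrix of `H` given by the rows indexed by the subset `K`. -/
noncomputable def stmt10.rowSub {N M : ℕ} (H : Matrix (Fin N) (Fin M) ℂ)
    (K : Finset (Fin N)) : Matrix K (Fin M) ℂ :=
  H.submatrix (fun i => (i : Fin N)) id

/-- The quantized uplink capacity
`R(K) = log₂ det(I + ρα² (α² I + α(1-α) diag(ρ H_K H_Kᴴ + I))⁻¹ H_K H_Kᴴ)`. -/
noncomputable def stmt10.Rq {N M : ℕ} (H : Matrix (Fin N) (Fin M) ℂ) (ρ α : ℝ)
    (K : Finset (Fin N)) : ℝ :=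
  Real.logb 2 ((Matrix.det
    ((1 : Matrix K K ℂ) + ((ρ : ℂ) * (α : ℂ) ^ 2) •
      (((α : ℂ) ^ 2 • (1 : Matrix K K ℂ)) + ((α : ℂ) * (1 - (α : ℂ))) •
        Matrix.diagonal (Matrix.diag
          ((ρ : ℂ) • (stmt10.rowSub H K * (stmt10.rowSub H K)ᴴ) + 1)))⁻¹ *
      (stmt10.rowSub H K * (stmt10.rowSub H K)ᴴ))).re)

/-- The simplified form `log₂ det(I + ρα (D_K)⁻¹ H_K H_Kᴴ)`. -/
noncomputable def stmt10.RD {N M : ℕ} (H : Matrix (Fin N) (Fin M) ℂ) (ρ α : ℝ)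
    (d : Fin N → ℝ) (K : Finset (Fin N)) : ℝ :=
  Real.logb 2 ((Matrix.det
    ((1 : Matrix K K ℂ) + ((ρ : ℂ) * (α : ℂ)) •
      (Matrix.diagonal (fun i : K => ((d i.1 : ℝ) : ℂ)))⁻¹ *
      (stmt10.rowSub H K * (stmt10.rowSub H K)ᴴ))).re)

/-!
Thermal and quantization noise on the antennas in `K` have total covariance `α D_K`, so `R(K)` is
`log₂ det(I + ρα D_K⁻¹ H_K H_Kᴴ)`. The crucial point is that the weight `ρα / d i` of an antenna
does not depend on `K`: by Sylvester's determinant identity, `R(K) = log₂ det(I + ∑_{i ∈ K} A i)`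
for fixed positive semidefinite matrices `A i = (ρα / d i) fᵢ fᵢᴴ`.

For `C = Bᴴ B`, the determinant lemma gives
`log det(P + C) - log det P = log det(I + B P⁻¹ Bᴴ)`. This is nonnegative, and it is antitone in `P`
since inversion reverses the Loewner order: these are monotonicity and submodularity.
-/

open scoped ComplexOrder MatrixOrder

/-- A real-valued set function has diminishing returns: the gain from adding one element can only
shrink as the set grows. -/
def IsSubmodular {ι : Type*} [DecidableEq ι] (f : Finset ι → ℝ) : Prop :=
  ∀ A B : Finset ι, A ⊆ B → ∀ s ∉ B, f (insert s B) - f B ≤ f (insert s A) - f A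

section LogDet

variable {𝕜 ι m n : Type*} [RCLike 𝕜] [DecidableEq n] {b : ℝ} {A : ι → Matrix n n 𝕜}

lemma posDef_of_one_le {M : Matrix n n 𝕜} (hM : 1 ≤ M) : M.PosDef := by
  simpa using PosDef.one.add_posSemidef (le_iff.mp hM)

lemma posDef_one_add_sum (hA : ∀ i, 0 ≤ A i) (K : Finset ι) : (1 + ∑ i ∈ K, A i).PosDef :=
  posDef_of_one_le (le_add_of_nonneg_right (Finset.sum_nonneg fun i _ => hA i))

lemma monotone_one_add_sum (hA : ∀ i, 0 ≤ A i) :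
    Monotone fun K : Finset ι => 1 + ∑ i ∈ K, A i := fun _ _ hKL =>
  add_le_add_right (Finset.sum_le_sum_of_subset_of_nonneg hKL fun i _ _ => hA i) 1

variable [Fintype n]

lemma one_le_det_of_one_le {M : Matrix n n 𝕜} (hM : 1 ≤ M) : 1 ≤ M.det := by
  have hM' : M.IsHermitian := (posDef_of_one_le hM).isHermitian
  have one_le_eigenvalues (i : n) : 1 ≤ hM'.eigenvalues i :=
    (CFC.one_le_iff M).mp hM _ (hM'.eigenvalues_mem_spectrum_real i)
  rw [hM'.det_eq_prod_eigenvalues]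
  exact_mod_cast Finset.one_le_prod fun i _ => one_le_eigenvalues i

-- Both sides say that the block matrix `[Q, 1; 1, P⁻¹]` is positive semidefinite, by taking the
-- Schur complement of either diagonal block.
lemma inv_le_inv_iff_of_posDef {P Q : Matrix n n 𝕜} (hP : P.PosDef) (hQ : Q.PosDef) :
    Q⁻¹ ≤ P⁻¹ ↔ P ≤ Q := by
  let := hP.isUnit.invertible
  let := hQ.isUnit.invertible
  simpa [le_iff] using
    (hQ.fromBlocks₁₁ 1 P⁻¹).symm.trans (PosDef.fromBlocks₂₂ Q (1 : Matrix n n 𝕜) hP.inv)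

/-- The base-`b` log-determinant of a positive definite matrix, taking the real part because
the determinant has values in `𝕜`. -/
noncomputable def logDet (b : ℝ) (P : Matrix n n 𝕜) : ℝ :=
  Real.logb b (RCLike.re P.det)

lemma logDet_one : logDet b (1 : Matrix n n 𝕜) = 0 := by
  simp [logDet]

lemma logDet_nonneg (hb : 1 < b) {M : Matrix n n 𝕜} (hM : 1 ≤ M) : 0 ≤ logDet b M :=
  Real.logb_nonneg hb (by simpa using RCLike.re_le_re (one_le_det_of_one_le hM))

lemma logDet_add_conjTranspose_mul_self [Fintype m] [DecidableEq m] {P : Matrix n n 𝕜}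
    (hP : P.PosDef) (B : Matrix m n 𝕜) :
    logDet b (P + Bᴴ * B) = logDet b P + logDet b (1 + B * P⁻¹ * Bᴴ) := by
  have hM : (1 + B * P⁻¹ * Bᴴ).PosDef :=
    PosDef.one.add_posSemidef (hP.inv.posSemidef.mul_mul_conjTranspose_same B)
  obtain ⟨p, hp, hp'⟩ := RCLike.pos_iff_exists_ofReal.mp hP.det_pos
  obtain ⟨q, hq, hq'⟩ := RCLike.pos_iff_exists_ofReal.mp hM.det_pos
  simp only [logDet]
  rw [det_add_mul _ _ ((isUnit_iff_isUnit_det P).mp hP.isUnit), ← hp', ← hq', ← RCLike.ofReal_mul]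
  simp only [RCLike.ofReal_re, Real.logb_mul hp.ne' hq.ne']

lemma logDet_le_logDet (hb : 1 < b) {P Q : Matrix n n 𝕜} (hP : P.PosDef) (hPQ : P ≤ Q) :
    logDet b P ≤ logDet b Q := by
  obtain ⟨B, hB⟩ := CStarAlgebra.nonneg_iff_eq_star_mul_self.mp (sub_nonneg.mpr hPQ)
  obtain rfl : Q = P + Bᴴ * B := by rw [← star_eq_conjTranspose, ← hB, add_sub_cancel]
  rw [logDet_add_conjTranspose_mul_self hP]
  exact le_add_of_nonneg_right <| logDet_nonneg hb <|
    le_add_of_nonneg_right (hP.inv.posSemidef.mul_mul_conjTranspose_same B).nonneg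

lemma logDet_add_sub_logDet_le (hb : 1 < b) {P Q C : Matrix n n 𝕜} (hP : P.PosDef)
    (hPQ : P ≤ Q) (hC : 0 ≤ C) :
    logDet b (Q + C) - logDet b Q ≤ logDet b (P + C) - logDet b P := by
  have hQ : Q.PosDef := by simpa using hP.add_posSemidef (le_iff.mp hPQ)
  obtain ⟨B, rfl⟩ := CStarAlgebra.nonneg_iff_eq_star_mul_self.mp hC
  rw [star_eq_conjTranspose, logDet_add_conjTranspose_mul_self hQ,
    logDet_add_conjTranspose_mul_self hP, add_sub_cancel_left, add_sub_cancel_left]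
  have gain_le : B * Q⁻¹ * Bᴴ ≤ B * P⁻¹ * Bᴴ :=
    star_right_conjugate_le_conjugate ((inv_le_inv_iff_of_posDef hP hQ).mpr hPQ) B
  exact logDet_le_logDet hb
    (PosDef.one.add_posSemidef (hQ.inv.posSemidef.mul_mul_conjTranspose_same B))
    (add_le_add_right gain_le 1)

theorem monotone_logDet_one_add_sum (hb : 1 < b) (hA : ∀ i, 0 ≤ A i) :
    Monotone fun K : Finset ι => logDet b (1 + ∑ i ∈ K, A i) := fun K _ hKL =>
  logDet_le_logDet hb (posDef_one_add_sum hA K) (monotone_one_add_sum hA hKL)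

theorem isSubmodular_logDet_one_add_sum [DecidableEq ι] (hb : 1 < b) (hA : ∀ i, 0 ≤ A i) :
    IsSubmodular fun K : Finset ι => logDet b (1 + ∑ i ∈ K, A i) := by
  intro K L hKL s hs
  have one_add_sum_insert {J : Finset ι} (hJ : s ∉ J) :
      1 + ∑ i ∈ insert s J, A i = 1 + ∑ i ∈ J, A i + A s := by
    rw [Finset.sum_insert hJ, add_comm (A s), add_assoc]
  simp only [one_add_sum_insert hs, one_add_sum_insert fun h => hs (hKL h)]
  exact logDet_add_sub_logDet_le hb (posDef_one_add_sum hA K) (monotone_one_add_sum hA hKL) (hA s)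

end LogDet

section WeightedGram

variable {R ι m : Type*} [CommRing R] [StarRing R]

lemma conjTranspose_mul_diagonal_mul_self [Fintype ι] [DecidableEq ι] (X : Matrix ι m R)
    (c : ι → R) :
    Xᴴ * (diagonal c * X) = ∑ i, c i • vecMulVec (star (X i)) (X i) := by
  ext j k
  rw [mul_apply]
  simp only [diagonal_mul, conjTranspose_apply, Matrix.sum_apply, Matrix.smul_apply,
    vecMulVec_apply, Pi.star_apply, smul_eq_mul, mul_left_comm]

lemma det_one_add_diagonal_mul_gram_submatrix [Fintype m] [DecidableEq m] [DecidableEq ι]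
    (X : Matrix ι m R) (c : ι → R) (K : Finset ι) :
    (1 + diagonal (fun i : K => c i) *
      (X.submatrix ((↑) : K → ι) id * (X.submatrix ((↑) : K → ι) id)ᴴ)).det =
      (1 + ∑ i ∈ K, c i • vecMulVec (star (X i)) (X i)).det := by
  rw [← Matrix.mul_assoc, det_one_add_mul_comm, conjTranspose_mul_diagonal_mul_self,
    ← Finset.sum_coe_sort K]
  rfl

end WeightedGram

lemma smul_inv_diagonal {F n : Type*} [Field F] [Fintype n] [DecidableEq n] (a : F) {v : n → F}
    (hv : ∀ i, v i ≠ 0) : a • (diagonal v)⁻¹ = diagonal fun i => a / v i := by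
  have inv_diagonal_eq : (diagonal v)⁻¹ = diagonal fun i => (v i)⁻¹ := by
    apply inv_eq_right_inv
    simp [hv]
  simp only [inv_diagonal_eq, ← diagonal_smul, Pi.smul_def, smul_eq_mul, div_eq_mul_inv]

section QuantizedUplink

variable {N M : ℕ} {H : Matrix (Fin N) (Fin M) ℂ} {ρ α : ℝ} {d : Fin N → ℝ}

lemma stmt10.noiseLevel_pos (hρ : 0 ≤ ρ) (hα : α ≤ 1)
    (hd : ∀ i, d i = 1 + ρ * (1 - α) * ∑ j, ‖H i j‖ ^ 2) (i : Fin N) : 0 < d i := by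
  have : 0 ≤ 1 - α := sub_nonneg.mpr hα
  rw [hd]
  positivity

lemma stmt10.rowSub_mul_conjTranspose_apply_self (H : Matrix (Fin N) (Fin M) ℂ) (K : Finset (Fin N))
    (i : K) :
    (stmt10.rowSub H K * (stmt10.rowSub H K)ᴴ) i i = ((∑ j, ‖H i j‖ ^ 2 : ℝ) : ℂ) := by
  simp [mul_apply, stmt10.rowSub, Complex.mul_conj']

lemma stmt10.noiseCovariance_eq_diagonal (hd : ∀ i, d i = 1 + ρ * (1 - α) * ∑ j, ‖H i j‖ ^ 2)
    (K : Finset (Fin N)) :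
    (α : ℂ) ^ 2 • (1 : Matrix K K ℂ) + ((α : ℂ) * (1 - (α : ℂ))) •
        diagonal (diag ((ρ : ℂ) • (stmt10.rowSub H K * (stmt10.rowSub H K)ᴴ) + 1)) =
      diagonal fun i : K => (α : ℂ) * d i := by
  rw [← diagonal_one, ← diagonal_smul, ← diagonal_smul, diagonal_add]
  congr 1
  funext i
  simp only [Pi.smul_apply, diag_apply, Matrix.add_apply, Matrix.smul_apply,
    stmt10.rowSub_mul_conjTranspose_apply_self, diagonal_apply_eq, smul_eq_mul, hd]
  push_cast
  ring

theorem stmt10.Rq_eq_RD (hα : α ≠ 0) (hd : ∀ i, d i = 1 + ρ * (1 - α) * ∑ j, ‖H i j‖ ^ 2)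
    (hd₀ : ∀ i, d i ≠ 0) (K : Finset (Fin N)) : stmt10.Rq H ρ α K = stmt10.RD H ρ α d K := by
  have hα' : (α : ℂ) ≠ 0 := Complex.ofReal_ne_zero.mpr hα
  have hd' (i : K) : (d i : ℂ) ≠ 0 := Complex.ofReal_ne_zero.mpr (hd₀ i)
  have weight_eq (i : K) :
      (ρ : ℂ) * (α : ℂ) ^ 2 / ((α : ℂ) * d i) = (ρ : ℂ) * (α : ℂ) / d i := by
    rw [← mul_div_mul_left ((ρ : ℂ) * α) _ hα']
    ring
  rw [stmt10.Rq, stmt10.RD, stmt10.noiseCovariance_eq_diagonal hd,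
    smul_inv_diagonal _ fun i => mul_ne_zero hα' (hd' i), smul_inv_diagonal _ hd']
  simp only [weight_eq]

theorem stmt10.RD_eq_logDet (hd₀ : ∀ i, d i ≠ 0) (K : Finset (Fin N)) :
    stmt10.RD H ρ α d K =
      logDet 2 (1 + ∑ i ∈ K, ((ρ : ℂ) * α / d i) • vecMulVec (star (H i)) (H i)) := by
  rw [stmt10.RD, smul_inv_diagonal _ fun i : K => Complex.ofReal_ne_zero.mpr (hd₀ i), logDet,
    ← det_one_add_diagonal_mul_gram_submatrix]
  rfl

end QuantizedUplink

/-- For `H : ℂ^{N×M}` with rows `fᵢᴴ`, `ρ > 0`, `α ∈ (0,1)`, and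
`dᵢ = 1 + ρ(1-α)‖fᵢ‖²`: (i) the quantized uplink capacity `R(K)` equals
`log₂ det(I + ρα (D_K)⁻¹ H_K H_Kᴴ)`; (ii) `K ↦ R(K)` is normalized, monotone nondecreasing,
and submodular. -/
theorem stmt10 (N M : ℕ) (H : Matrix (Fin N) (Fin M) ℂ) (ρ α : ℝ) (hρ : 0 < ρ)
    (hα : α ∈ Set.Ioo (0 : ℝ) 1)
    (d : Fin N → ℝ) (hd : ∀ i, d i = 1 + ρ * (1 - α) * ∑ j, ‖H i j‖ ^ 2) :
    (∀ K : Finset (Fin N), stmt10.Rq H ρ α K = stmt10.RD H ρ α d K) ∧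
      stmt10.Rq H ρ α ∅ = 0 ∧
      (∀ A B : Finset (Fin N), A ⊆ B → stmt10.Rq H ρ α A ≤ stmt10.Rq H ρ α B) ∧
      (∀ A B : Finset (Fin N), A ⊆ B → ∀ s ∉ B,
        stmt10.Rq H ρ α (insert s B) - stmt10.Rq H ρ α B ≤
          stmt10.Rq H ρ α (insert s A) - stmt10.Rq H ρ α A) := by
  have d_pos (i : Fin N) : 0 < d i := stmt10.noiseLevel_pos hρ.le hα.2.le hd i
  have d_ne_zero (i : Fin N) : d i ≠ 0 := (d_pos i).ne'
  have Rq_eq_RD_d := stmt10.Rq_eq_RD hα.1.ne' hd d_ne_zero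
  have Rq_eq_logDet : stmt10.Rq H ρ α = fun K =>
      logDet 2 (1 + ∑ i ∈ K, ((ρ : ℂ) * α / d i) • vecMulVec (star (H i)) (H i)) :=
    funext fun K => (Rq_eq_RD_d K).trans (stmt10.RD_eq_logDet d_ne_zero K)
  have term_nonneg (i : Fin N) :
      0 ≤ ((ρ : ℂ) * α / d i) • vecMulVec (star (H i)) (H i) := by
    have weight_nonneg : (0 : ℂ) ≤ (ρ : ℂ) * α / d i :=
      mod_cast (div_pos (mul_pos hρ hα.1) (d_pos i)).le
    exact ((posSemidef_vecMulVec_star_self (H i)).smul weight_nonneg).nonneg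
  refine ⟨Rq_eq_RD_d, ?_, ?_, ?_⟩ <;> rw [Rq_eq_logDet]
  · simp [logDet_one]
  · exact fun A B hAB => monotone_logDet_one_add_sum one_lt_two term_nonneg hAB
  · exact isSubmodular_logDet_one_add_sum one_lt_two term_nonneg
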